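/- Let φ : ℝ → ℝ be non-negative with B₁ := E_{t∼N(0,1)}[φ(t)] > 0 and B₂ := E_{t∼N(0,1)}[φ(t)²] < ∞, and let f(x) = Σ_{i=1}^k α_i φ(⟨w^{(i)}, x⟩) with α_i > 0 and unit vectors w^{(i)} ∈ ℝ^d. Fix c > 0, let ξ_1,…,ξ_m be zero-mean σ-subgaussian noise variables, x^{(1)},…,x^{(m)} ∼ N^d i.i.d. (independent of the noise), y^{(i)} = f(x^{(i)}) + ξ_i, and let μ̂ = (1/m) Σ_{i=1}^m y^{(i)}. If m ≥ 16 · max( k B₂ / B₁², k / c² ), then with probability at least 3/4 the following two inequalities hold simultaneously: E_{x∼N^d}[f(x)] ≤ 2 μ̂ + 2 c σ / √k and μ̂ ≤ (3/2) · E_{x∼N^d}[f(x)] + c σ / √k. -/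

import Mathlib

/-!
Write `F` for the mean of the network and `S = ∑ α i`. Each `⟨w i, x⟩` is standard Gaussian, so
`F = S * B₁`, and Cauchy-Schwarz with weights `α` gives `E[f²] ≤ S² * B₂`. A subgaussian variable
has second moment at most `σ²`. Hence the empirical mean has variance at most
`(S² * B₂ + σ²) / m ≤ (F² + b²) / 16`, where `b = c * σ / √k`. Both inequalities hold as soon as
the empirical mean is within `F / 2 + b` of `F`, and Chebyshev's inequality bounds the failure
probability by `(F² + b²) / (16 * (F / 2 + b)²) ≤ 1 / 4`. Applying Chebyshev to the two sources of
randomness separately would lose too much when `k = 1`, so their sum is treated at once.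
-/

open MeasureTheory ProbabilityTheory Real Finset

noncomputable def stdGaussian (d : ℕ) : Measure (Fin d → ℝ) :=
  Measure.pi fun _ => gaussianReal 0 1

/-- One-hidden-layer network with activation `φ`: `x ↦ ∑ i, α i * φ ⟨w i, x⟩`. -/
noncomputable def phiNet (φ : ℝ → ℝ) {d k : ℕ} (α : Fin k → ℝ) (w : Fin k → Fin d → ℝ)
    (x : Fin d → ℝ) : ℝ :=
  ∑ i, α i * φ (∑ j, w i j * x j)

/-- `ν` is a zero-mean `σ`-subgaussian probability distribution on `ℝ`. -/
def IsZeroMeanSubgaussian (ν : Measure ℝ) (σ : ℝ) : Prop :=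
  IsProbabilityMeasure ν ∧ (∫ t, t ∂ν) = 0 ∧
    ∀ l : ℝ, Integrable (fun t => Real.exp (l * t)) ν ∧
      (∫ t, Real.exp (l * t) ∂ν) ≤ Real.exp (l ^ 2 * σ ^ 2 / 2)

/-- A linear functional with unit coefficient vector is standard Gaussian under `stdGaussian d`. -/
theorem measurePreserving_unit_functional {d : ℕ} (u : Fin d → ℝ) (hu : ∑ j, u j ^ 2 = 1) :
    MeasurePreserving (fun x : Fin d → ℝ => ∑ j, u j * x j) (stdGaussian d)
      (gaussianReal 0 1) := by
  have hmeas : Measurable (fun x : Fin d → ℝ => ∑ j, u j * x j) := by fun_prop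
  refine ⟨hmeas, ?_⟩
  unfold _root_.stdGaussian
  have : IsProbabilityMeasure ((Measure.pi fun _ : Fin d => gaussianReal 0 1).map
      (fun x : Fin d → ℝ => ∑ j, u j * x j)) := Measure.isProbabilityMeasure_map hmeas.aemeasurable
  apply Measure.ext_of_charFun
  ext t
  -- The characteristic function at `t` is the joint one at the vector `t • u`.
  have key := charFun_stdGaussian (E := EuclideanSpace ℝ (Fin d)) (WithLp.toLp 2 (fun j => t * u j))
  rw [← map_pi_eq_stdGaussian, charFun_apply, integral_map (by fun_prop) (by fun_prop)] at key
  rw [charFun_apply_real, integral_map hmeas.aemeasurable (by fun_prop), charFun_gaussianReal]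
  have hn : ‖(WithLp.toLp 2 (fun j => t * u j) : EuclideanSpace ℝ (Fin d))‖ ^ 2 = t ^ 2 := by
    simp [EuclideanSpace.norm_sq_eq, mul_pow, ← Finset.mul_sum, hu]
  rw [← Complex.ofReal_pow, hn] at key
  convert key using 1
  · congr 1
    ext x
    congr 2
    simp only [PiLp.inner_apply, RCLike.inner_apply, conj_trivial]
    rw [← Complex.ofReal_mul, Finset.mul_sum]
    congr 1
    exact Finset.sum_congr rfl fun j _ => by ring
  · congr 1
    push_cast
    simp
    ring

/-- A subgaussian variable has second moment at most `σ²`: compare second-order terms at `0` in the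
moment generating function, symmetrised so that the linear term cancels. -/
theorem IsZeroMeanSubgaussian.sq_le {ν : Measure ℝ} {σ : ℝ} (h : IsZeroMeanSubgaussian ν σ) :
    Integrable (fun t => t ^ 2) ν ∧ ∫ t, t ^ 2 ∂ν ≤ σ ^ 2 := by
  obtain ⟨hp, -, hexp⟩ := h
  have hpt : ∀ s : ℝ, s ^ 2 ≤ Real.exp s + Real.exp (-s) - 2 := by
    intro s
    -- The right-hand side is `(2 * sinh (s / 2))²`, and `|y| ≤ |sinh y|`.
    have h1 : |s / 2| ≤ |Real.sinh (s / 2)| := by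
      rw [Real.abs_sinh]
      exact Real.self_le_sinh_iff.2 (abs_nonneg _)
    have h2 := sq_le_sq.2 h1
    have h3 := Real.cosh_two_mul (s / 2)
    rw [Real.cosh_sq, mul_div_cancel₀ s (by norm_num : (2 : ℝ) ≠ 0), Real.cosh_eq] at h3
    linarith
  have hI : ∀ l : ℝ, Integrable (fun t => Real.exp (l * t) + Real.exp (-(l * t)) - 2) ν := by
    intro l
    refine ((hexp l).1.add ?_).sub (integrable_const _)
    simpa only [neg_mul] using (hexp (-l)).1
  have hint : Integrable (fun t : ℝ => t ^ 2) ν := by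
    refine (hI 1).mono' (by fun_prop) (Filter.Eventually.of_forall fun t => ?_)
    rw [Real.norm_of_nonneg (sq_nonneg t)]
    simpa using hpt t
  refine ⟨hint, ?_⟩
  have hl : ∀ l : ℝ, l ^ 2 * ∫ t, t ^ 2 ∂ν ≤ 2 * (Real.exp (l ^ 2 * σ ^ 2 / 2) - 1) := by
    intro l
    rw [← integral_const_mul]
    calc ∫ t, l ^ 2 * t ^ 2 ∂ν
        ≤ ∫ t, (Real.exp (l * t) + Real.exp (-(l * t)) - 2) ∂ν := by
          refine integral_mono (hint.const_mul _) (hI l) fun t => ?_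
          have := hpt (l * t)
          simpa only [mul_pow] using this
      _ = (∫ t, Real.exp (l * t) ∂ν) + (∫ t, Real.exp (-l * t) ∂ν) - 2 := by
          simp only [← neg_mul]
          have h1 : Integrable (fun t => Real.exp (l * t) + Real.exp (-l * t)) ν :=
            (hexp l).1.add (hexp (-l)).1
          rw [integral_sub h1 (integrable_const _), integral_add (hexp l).1 (hexp (-l)).1]
          simp
      _ ≤ _ := by
          have h1 := (hexp l).2
          have h2 := (hexp (-l)).2
          rw [neg_sq] at h2
          linarith
  refine le_of_forall_pos_le_add fun ε hε => ?_
  -- `exp y - 1 ≤ y + y²` for `y = v * σ² / 2 ≤ 1` leaves the error `v * σ⁴ / 2 ≤ ε`.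
  obtain ⟨v, hv, hv1, hv2⟩ : ∃ v : ℝ, 0 < v ∧ v * σ ^ 2 ≤ 2 ∧ v * σ ^ 4 / 2 ≤ ε := by
    refine ⟨min (2 / (σ ^ 2 + 1)) (2 * ε / (σ ^ 4 + 1)), by positivity, ?_, ?_⟩
    · calc _ ≤ 2 / (σ ^ 2 + 1) * σ ^ 2 := by gcongr; exact min_le_left _ _
        _ ≤ 2 := by
          rw [div_mul_eq_mul_div, div_le_iff₀ (by positivity)]
          linarith
    · calc _ ≤ 2 * ε / (σ ^ 4 + 1) * σ ^ 4 / 2 := by gcongr; exact min_le_right _ _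
        _ ≤ ε := by
          rw [div_mul_eq_mul_div, div_div, div_le_iff₀ (by positivity)]
          nlinarith
  have h1 := hl (Real.sqrt v)
  rw [Real.sq_sqrt hv.le] at h1
  have hy : |v * σ ^ 2 / 2| ≤ 1 := by
    rw [abs_of_nonneg (by positivity)]
    linarith
  have h2 := (abs_le.1 (Real.abs_exp_sub_one_sub_id_le hy)).2
  have h3 : v * ∫ t, t ^ 2 ∂ν ≤ v * (σ ^ 2 + v * σ ^ 4 / 2) := by nlinarith
  have h4 := le_of_mul_le_mul_left h3 hv
  linarith

/-- Chebyshev's inequality for the mean of `m` independent copies of `Y`, with failure probability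
`1 / 4`. -/
theorem chebyshev_mean {Ω : Type*} [MeasurableSpace Ω] (P : Measure Ω) [IsProbabilityMeasure P]
    {m : ℕ} (hm : 0 < (m : ℝ)) {Y : Ω → ℝ} (hYm : Measurable Y) (hY : MemLp Y 2 P) {r : ℝ}
    (hr : 0 < r) (hvar : Var[Y; P] / m ≤ r ^ 2 / 4) :
    ENNReal.ofReal (3 / 4) ≤ (Measure.pi fun _ : Fin m => P)
      {s | |(1 / (m : ℝ)) * ∑ i, Y (s i) - ∫ ω, Y ω ∂P| < r} := by
  set Q := Measure.pi fun _ : Fin m => P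
  set X : (Fin m → Ω) → ℝ := fun s => (1 / (m : ℝ)) * ∑ i, Y (s i)
  have hmp : ∀ i : Fin m, MeasurePreserving (fun s : Fin m → Ω => s i) Q P :=
    fun i => measurePreserving_eval _ i
  have hL : ∀ i : Fin m, MemLp (fun s : Fin m → Ω => Y (s i)) 2 Q :=
    fun i => hY.comp_measurePreserving (hmp i)
  have hX : MemLp X 2 Q := (memLp_finsetSum _ fun i _ => hL i).const_mul _
  have hmean : ∫ s, X s ∂Q = ∫ ω, Y ω ∂P := by
    have h1 : ∀ i : Fin m, ∫ s, Y (s i) ∂Q = ∫ ω, Y ω ∂P := fun i =>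
      integral_comp_eval (μ := fun _ : Fin m => P) hYm.aestronglyMeasurable
    simp only [X]
    rw [integral_const_mul, integral_finsetSum _ fun i _ => (hL i).integrable (by norm_num)]
    simp only [h1, Finset.sum_const, Finset.card_univ, Fintype.card_fin, nsmul_eq_mul]
    field_simp
  have hv : Var[X; Q] = Var[Y; P] / m := by
    have h1 := variance_sum_pi (μ := fun _ : Fin m => P) (X := fun _ => Y) fun _ => hY
    have h2 : (∑ i : Fin m, fun s : Fin m → Ω => Y (s i)) = fun s => ∑ i, Y (s i) := by
      ext s
      simp
    rw [h2] at h1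
    simp only [X]
    rw [variance_const_mul, h1]
    simp only [Finset.sum_const, Finset.card_univ, Fintype.card_fin, nsmul_eq_mul]
    field_simp
  have hXm : Measurable X := by fun_prop
  have hcheb := meas_ge_le_variance_div_sq hX hr
  rw [hmean, hv] at hcheb
  have hset : {s | |X s - ∫ ω, Y ω ∂P| < r} = {s | r ≤ |X s - ∫ ω, Y ω ∂P|}ᶜ := by
    ext s
    simp
  rw [hset, prob_compl_eq_one_sub (measurableSet_le measurable_const (by fun_prop))]
  have hq : Q {s | r ≤ |X s - ∫ ω, Y ω ∂P|} ≤ ENNReal.ofReal (1 / 4) := by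
    refine hcheb.trans (ENNReal.ofReal_le_ofReal ?_)
    rw [div_le_iff₀ (by positivity)]
    linarith
  calc ENNReal.ofReal (3 / 4) = 1 - ENNReal.ofReal (1 / 4) := by
        rw [← ENNReal.ofReal_one, ← ENNReal.ofReal_sub _ (by norm_num)]
        norm_num
    _ ≤ _ := tsub_le_tsub_left hq 1

/-- First and second moments of the network under the standard Gaussian. -/
theorem phiNet_moments {d k : ℕ} {φ : ℝ → ℝ} (hφ : Measurable φ)
    (hB2 : Integrable (fun t => φ t ^ 2) (gaussianReal 0 1))
    {α : Fin k → ℝ} {w : Fin k → Fin d → ℝ}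
    (hα : ∀ i, 0 < α i) (hw : ∀ i, ∑ j, w i j ^ 2 = 1) :
    MemLp (phiNet φ α w) 2 (stdGaussian d) ∧
      ∫ x, phiNet φ α w x ∂stdGaussian d = (∑ i, α i) * ∫ t, φ t ∂gaussianReal 0 1 ∧
      ∫ x, phiNet φ α w x ^ 2 ∂stdGaussian d ≤
        (∑ i, α i) ^ 2 * ∫ t, φ t ^ 2 ∂gaussianReal 0 1 := by
  have : IsProbabilityMeasure (stdGaussian d) := by unfold _root_.stdGaussian; infer_instance
  have hmp := fun i => measurePreserving_unit_functional (w i) (hw i)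
  have hφ2 : MemLp φ 2 (gaussianReal 0 1) :=
    (memLp_two_iff_integrable_sq hφ.aestronglyMeasurable).2 hB2
  have hL : ∀ i, MemLp (fun x : Fin d → ℝ => φ (∑ j, w i j * x j)) 2 (stdGaussian d) :=
    fun i => hφ2.comp_measurePreserving (hmp i)
  have hf : MemLp (phiNet φ α w) 2 (stdGaussian d) :=
    memLp_finsetSum _ fun i _ => (hL i).const_mul _
  have hint : ∀ g : ℝ → ℝ, Measurable g → ∀ i,
      ∫ x, g (∑ j, w i j * x j) ∂stdGaussian d = ∫ t, g t ∂gaussianReal 0 1 := by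
    intro g hg i
    rw [← (hmp i).map_eq, integral_map (hmp i).measurable.aemeasurable hg.aestronglyMeasurable]
  refine ⟨hf, ?_, ?_⟩
  · unfold phiNet
    rw [integral_finsetSum _ fun i _ => ((hL i).integrable (by norm_num)).const_mul _,
      Finset.sum_mul]
    refine Finset.sum_congr rfl fun i _ => ?_
    rw [integral_const_mul, hint φ hφ i]
  · have hsq : ∀ i ∈ Finset.univ, Integrable
        (fun x : Fin d → ℝ => α i * φ (∑ j, w i j * x j) ^ 2) (stdGaussian d) :=
      fun i _ => (hL i).integrable_sq.const_mul _
    calc ∫ x, phiNet φ α w x ^ 2 ∂stdGaussian d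
        ≤ ∫ x, (∑ i, α i) * ∑ i, α i * φ (∑ j, w i j * x j) ^ 2 ∂stdGaussian d := by
          refine integral_mono hf.integrable_sq ((integrable_finsetSum _ hsq).const_mul _)
            fun x => ?_
          exact Finset.sum_sq_le_sum_mul_sum_of_sq_le_mul _ (fun i _ => (hα i).le)
            (fun i _ => mul_nonneg (hα i).le (sq_nonneg _)) fun i _ => le_of_eq (by ring)
      _ = _ := by
          rw [integral_const_mul, integral_finsetSum _ hsq, sq, mul_assoc]
          congr 1
          rw [Finset.sum_mul]
          refine Finset.sum_congr rfl fun i _ => ?_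
          rw [integral_const_mul, hint (fun t => φ t ^ 2) (hφ.pow_const 2) i]

theorem stmt14 (d k m : ℕ) (hk : 1 ≤ k) (φ : ℝ → ℝ) (hφ : Measurable φ)
    (hφ0 : ∀ t, 0 ≤ φ t)
    (hB1 : 0 < ∫ t, φ t ∂gaussianReal 0 1)
    (hB2 : Integrable (fun t => φ t ^ 2) (gaussianReal 0 1))
    (α : Fin k → ℝ) (w : Fin k → Fin d → ℝ)
    (hα : ∀ i, 0 < α i) (hw : ∀ i, ∑ j, w i j ^ 2 = 1)
    (c σ : ℝ) (hc : 0 < c) (hσ : 0 ≤ σ)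
    (ν : Measure ℝ) (hν : IsZeroMeanSubgaussian ν σ)
    (hm : 16 * max ((k : ℝ) * (∫ t, φ t ^ 2 ∂gaussianReal 0 1) /
        (∫ t, φ t ∂gaussianReal 0 1) ^ 2) ((k : ℝ) / c ^ 2) ≤ (m : ℝ)) :
    ENNReal.ofReal (3 / 4) ≤
      (Measure.pi fun _ : Fin m => (stdGaussian d).prod ν)
        {s : Fin m → (Fin d → ℝ) × ℝ |
          (∫ x, phiNet φ α w x ∂stdGaussian d) ≤
              2 * ((1 / (m : ℝ)) * ∑ i, (phiNet φ α w (s i).1 + (s i).2)) +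
                2 * c * σ / Real.sqrt k ∧
            (1 / (m : ℝ)) * ∑ i, (phiNet φ α w (s i).1 + (s i).2) ≤
              3 / 2 * (∫ x, phiNet φ α w x ∂stdGaussian d) + c * σ / Real.sqrt k} := by
  obtain ⟨hf2, hmean, hsecond⟩ := phiNet_moments (d := d) hφ hB2 hα hw
  obtain ⟨hνi, hνs⟩ := hν.sq_le
  obtain ⟨hνp, hν0, -⟩ := hν
  have hG : IsProbabilityMeasure (stdGaussian d) := by unfold _root_.stdGaussian; infer_instance
  have hfm : Measurable (phiNet φ α w) := by unfold phiNet; fun_prop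
  have hid : MemLp (fun t : ℝ => t) 2 ν :=
    (memLp_two_iff_integrable_sq measurable_id.aestronglyMeasurable).2 hνi
  set B1 := ∫ t, φ t ∂gaussianReal 0 1
  set B2 := ∫ t, φ t ^ 2 ∂gaussianReal 0 1
  set F := ∫ x, phiNet φ α w x ∂stdGaussian d
  set S := ∑ i, α i
  have hk1 : (1 : ℝ) ≤ k := by exact_mod_cast hk
  have hk0 : (0 : ℝ) < k := by linarith
  have hS : 0 < S := by
    have : Nonempty (Fin k) := ⟨⟨0, hk⟩⟩
    exact Finset.sum_pos (fun i _ => hα i) Finset.univ_nonempty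
  have hF : 0 < F := hmean ▸ mul_pos hS hB1
  have hB20 : 0 ≤ B2 := integral_nonneg fun t => sq_nonneg _
  have hm1 : 16 * (k * B2 / B1 ^ 2) ≤ m :=
    (mul_le_mul_of_nonneg_left (le_max_left _ _) (by norm_num)).trans hm
  have hm2 : 16 * (k / c ^ 2) ≤ (m : ℝ) :=
    (mul_le_mul_of_nonneg_left (le_max_right _ _) (by norm_num)).trans hm
  have hm0 : (0 : ℝ) < m := lt_of_lt_of_le (by positivity) hm2
  have hb0 : 0 ≤ c * σ / Real.sqrt k := by positivity
  have hb2 : (c * σ / Real.sqrt k) ^ 2 = c ^ 2 * σ ^ 2 / k := by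
    rw [div_pow, Real.sq_sqrt hk0.le, mul_pow]
  have hvar : Var[fun p : (Fin d → ℝ) × ℝ => phiNet φ α w p.1 + p.2; (stdGaussian d).prod ν] ≤
      S ^ 2 * B2 + σ ^ 2 := by
    rw [variance_add_prod hf2 hid]
    refine add_le_add ?_ ?_
    · exact (variance_le_expectation_sq hf2.aestronglyMeasurable).trans hsecond
    · exact (variance_le_expectation_sq hid.aestronglyMeasurable).trans hνs
  have hYmean : ∫ p, (phiNet φ α w p.1 + p.2) ∂((stdGaussian d).prod ν) = F := by
    rw [integral_add ((hf2.comp_fst ν).integrable (by norm_num))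
      ((hid.comp_snd (stdGaussian d)).integrable (by norm_num)), integral_fun_fst (phiNet φ α w),
      integral_fun_snd (fun t : ℝ => t), hν0]
    simp [F]
  have hs1 : S ^ 2 * B2 / m ≤ F ^ 2 / 16 := by
    rw [div_le_iff₀ hm0, hmean]
    have h1 : 16 * (k * B2) ≤ m * B1 ^ 2 := by
      rw [← mul_div_assoc, div_le_iff₀ (by positivity)] at hm1
      exact hm1
    have h2 : 16 * B2 ≤ m * B1 ^ 2 := by nlinarith
    nlinarith [mul_le_mul_of_nonneg_left h2 (sq_nonneg S)]
  have hs2 : σ ^ 2 / m ≤ (c * σ / Real.sqrt k) ^ 2 / 16 := by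
    rw [hb2, div_le_iff₀ hm0]
    rw [← mul_div_assoc, div_le_iff₀ (by positivity)] at hm2
    rw [div_div, div_mul_eq_mul_div, le_div_iff₀ (by positivity)]
    nlinarith [mul_le_mul_of_nonneg_left hm2 (sq_nonneg σ)]
  have hcheb := chebyshev_mean ((stdGaussian d).prod ν) hm0
    (Y := fun p => phiNet φ α w p.1 + p.2) (by fun_prop)
    ((hf2.comp_fst ν).add (hid.comp_snd (stdGaussian d)))
    (r := F / 2 + c * σ / Real.sqrt k) (by positivity) (by
      calc _ ≤ (S ^ 2 * B2 + σ ^ 2) / m := by gcongr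
        _ ≤ F ^ 2 / 16 + (c * σ / Real.sqrt k) ^ 2 / 16 := by rw [add_div]; linarith
        _ ≤ _ := by nlinarith [mul_nonneg hF.le hb0, sq_nonneg (c * σ / Real.sqrt k)])
  refine hcheb.trans (measure_mono fun s hs => ?_)
  simp only [Set.mem_ofPred_eq, hYmean] at hs ⊢
  have hs' := abs_lt.1 hs
  have h2 : 2 * c * σ / Real.sqrt k = 2 * (c * σ / Real.sqrt k) := by ring
  rw [h2]
  constructor <;> linarith [hs'.1, hs'.2]
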